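/- Let K^{BTBM}_t(x) be the d-dimensional BTBM density for d ∈ {1,2,3}, with the convention K^{BTBM}_t = 0 for t < 0. Then there is a constant C depending only on d such that for all 0 < r < t, ∫₀^t ∫_{ℝ^d} [K^{BTBM}_{t−s}(x) − K^{BTBM}_{r−s}(x)]² dx ds ≤ C (t−r)^{(4−d)/4}. -/

import Mathlib

open Real MeasureTheory Set

noncomputable def heatK (d : ℕ) (s : ℝ) (x : EuclideanSpace ℝ (Fin d)) : ℝ :=
  (2 * π * s) ^ (-(d : ℝ)/2) * Real.exp (-‖x‖^2 / (2*s))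

/-- BTBM density, with the convention that it vanishes for nonpositive times. -/
noncomputable def btbmK (d : ℕ) (t : ℝ) (x : EuclideanSpace ℝ (Fin d)) : ℝ :=
  if 0 < t then
    2 * ∫ s in Ioi (0:ℝ),
        heatK d s x * ((2 * π * t) ^ (-(1:ℝ)/2) * Real.exp (-s^2 / (2*t)))
  else 0

/-- The half-normal density. -/
noncomputable def hnPhi (u : ℝ) : ℝ := 2 * (2 * π) ^ (-(1:ℝ)/2) * Real.exp (-(1/2) * u ^ 2)

lemma hnPhi_pos (u : ℝ) : 0 < hnPhi u := by unfold hnPhi; positivity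

lemma hnPhi_meas : Measurable hnPhi := by unfold hnPhi; fun_prop

lemma heatK_meas (d : ℕ) :
    Measurable (fun z : ℝ × EuclideanSpace ℝ (Fin d) => heatK d z.1 z.2) := by
  unfold heatK; fun_prop

lemma heatK_zero (d : ℕ) (hd : d ≠ 0) (x : EuclideanSpace ℝ (Fin d)) : heatK d 0 x = 0 := by
  unfold heatK
  rw [mul_zero, Real.zero_rpow, zero_mul]
  have : (d : ℝ) ≠ 0 := by exact_mod_cast hd
  intro h
  apply this
  linarith

lemma btbmK_eq (d : ℕ) (hd : d ≠ 0) (t : ℝ) (x : EuclideanSpace ℝ (Fin d)) :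
    btbmK d t x = ∫ u in Ioi (0:ℝ), heatK d (√t * u) x * hnPhi u := by
  unfold btbmK
  split_ifs with ht
  · have hs : 0 < √t := Real.sqrt_pos.2 ht
    have h := integral_comp_mul_left_Ioi' (fun s : ℝ =>
      heatK d s x * ((2 * π * t) ^ (-(1:ℝ)/2) * Real.exp (-s^2 / (2*t)))) 0 hs
    rw [mul_zero] at h
    rw [← h, smul_eq_mul, ← integral_const_mul, ← integral_const_mul]
    congr 1
    ext u
    have h1 : √t * (2 * π * t) ^ (-(1:ℝ)/2) = (2 * π) ^ (-(1:ℝ)/2) := by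
      rw [Real.mul_rpow (by positivity) ht.le, Real.sqrt_eq_rpow, mul_comm, mul_assoc,
        ← Real.rpow_add ht]
      norm_num
    have h2 : -(√t * u) ^ 2 / (2 * t) = -(1/2) * u ^ 2 := by
      rw [mul_pow, Real.sq_sqrt ht.le]; field_simp
    simp only [h2]
    unfold hnPhi
    rw [← h1]; ring
  · rw [Real.sqrt_eq_zero_of_nonpos (not_lt.1 ht)]
    simp [heatK_zero d hd]

lemma heatK_bound (d : ℕ) (hd : d ≠ 0) (x : EuclideanSpace ℝ (Fin d)) (hx : x ≠ 0) :
    ∃ C : ℝ, ∀ s : ℝ, 0 ≤ s → ‖heatK d s x‖ ≤ C := by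
  have hx' : 0 < ‖x‖ := norm_pos_iff.2 hx
  have hp : (0:ℝ) < (d : ℝ) / 2 := by positivity
  set p : ℝ := (d : ℝ) / 2 with hpdef
  refine ⟨(π * ‖x‖ ^ 2) ^ (-p) * p ^ p, fun s hs => ?_⟩
  rcases hs.eq_or_lt with rfl | hs
  · rw [heatK_zero d hd, norm_zero]; positivity
  · have h0 : heatK d s x = (2 * π * s) ^ (-p) * Real.exp (-‖x‖^2 / (2*s)) := by
      unfold heatK; rw [hpdef, neg_div]
    have hnn : 0 ≤ heatK d s x := by rw [h0]; positivity
    rw [Real.norm_of_nonneg hnn, h0]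
    set y : ℝ := ‖x‖ ^ 2 / (2 * s) with hy
    have hypos : 0 < y := by positivity
    have h1 : 2 * π * s = (π * ‖x‖ ^ 2) * y⁻¹ := by rw [hy]; field_simp
    have h2 : (2 * π * s) ^ (-p) = (π * ‖x‖ ^ 2) ^ (-p) * y ^ p := by
      rw [h1, Real.mul_rpow (by positivity) (by positivity), Real.inv_rpow hypos.le,
        Real.rpow_neg hypos.le, inv_inv]
    rw [h2, neg_div, ← hy, mul_assoc]
    gcongr
    have h3 : (y / p) ^ p ≤ Real.exp y := by
      calc (y / p) ^ p ≤ (Real.exp (y / p)) ^ p := by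
            gcongr
            linarith [Real.add_one_le_exp (y / p)]
        _ = Real.exp y := by rw [← Real.exp_mul]; congr 1; field_simp
    rw [Real.div_rpow hypos.le hp.le, div_le_iff₀ (by positivity)] at h3
    rw [Real.exp_neg, ← div_eq_mul_inv, div_le_iff₀ (Real.exp_pos _)]
    linarith

lemma hnPhi_rpow_int (q : ℝ) (hq : q < 1) :
    IntegrableOn (fun u : ℝ => u ^ (-q) * hnPhi u) (Ioi 0) := by
  have h := (integrableOn_rpow_mul_exp_neg_mul_sq (b := 1/2) (by norm_num) (s := -q)
    (by linarith)).const_mul (2 * (2 * π) ^ (-(1:ℝ)/2))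
  refine h.congr (Filter.Eventually.of_forall fun u => ?_)
  simp only [hnPhi]; ring

lemma heatK_int (d : ℕ) (hd : d ≠ 0) (x : EuclideanSpace ℝ (Fin d)) (hx : x ≠ 0) (A : ℝ)
    (hA : 0 ≤ A) : IntegrableOn (fun u : ℝ => heatK d (A * u) x * hnPhi u) (Ioi 0) := by
  obtain ⟨C, hC⟩ := heatK_bound d hd x hx
  have h := hnPhi_rpow_int 0 (by norm_num)
  simp only [neg_zero, Real.rpow_zero, one_mul] at h
  refine Integrable.bdd_mul (c := C) h ?_ ?_
  · apply Measurable.aestronglyMeasurable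
    exact (heatK_meas d).comp (by fun_prop : Measurable fun u : ℝ => (A * u, x))
  · refine (ae_restrict_iff' measurableSet_Ioi).2 (Filter.Eventually.of_forall fun u hu => ?_)
    exact hC _ (mul_nonneg hA (le_of_lt hu))

/-- the constant -/
noncomputable def hnM (q : ℝ) : ENNReal := ∫⁻ u in Ioi (0:ℝ), ENNReal.ofReal (u ^ (-q) * hnPhi u)

lemma hnM_lt_top (q : ℝ) (hq : q < 1) : hnM q < ⊤ := by
  have h := (hnPhi_rpow_int q hq).lintegral_lt_top
  exact h

lemma hn_cs (q : ℝ) (f : ℝ → ℝ) (hf : Measurable f) :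
    ‖∫ u in Ioi (0:ℝ), f u * hnPhi u‖ₑ ^ 2 ≤
      hnM q * ∫⁻ u in Ioi (0:ℝ), ENNReal.ofReal (f u ^ 2 * (u ^ q * hnPhi u)) := by
  have hm := hnPhi_meas
  have h1 := enorm_integral_le_lintegral_enorm (μ := volume.restrict (Ioi (0:ℝ)))
    (fun u => f u * hnPhi u)
  set F : ℝ → ENNReal := fun u => ENNReal.ofReal (√(u ^ (-q) * hnPhi u)) with hF
  set G : ℝ → ENNReal := fun u => ENNReal.ofReal (√(f u ^ 2 * (u ^ q * hnPhi u))) with hG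
  have h2 : ∫⁻ u in Ioi (0:ℝ), ‖f u * hnPhi u‖ₑ = ∫⁻ u in Ioi (0:ℝ), (F * G) u := by
    refine setLIntegral_congr_fun measurableSet_Ioi fun u hu => ?_
    have hu : 0 < u := hu
    have := (hnPhi_pos u)
    simp only [Pi.mul_apply, hF, hG]
    rw [← ENNReal.ofReal_mul (by positivity), ← Real.sqrt_mul (by positivity),
      Real.enorm_eq_ofReal_abs, ← Real.sqrt_sq_eq_abs]
    congr 2
    rw [Real.rpow_neg hu.le]
    field_simp
  have h3 := ENNReal.lintegral_mul_le_Lp_mul_Lq (volume.restrict (Ioi (0:ℝ)))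
    Real.HolderConjugate.two_two (f := F) (g := G)
    (by simp only [hF]; fun_prop) (by simp only [hG]; fun_prop)
  have hFF : ∫⁻ u in Ioi (0:ℝ), F u ^ (2:ℝ) = hnM q := by
    refine setLIntegral_congr_fun measurableSet_Ioi fun u hu => ?_
    have hu : 0 < u := hu
    have := (hnPhi_pos u)
    simp only [hF]
    rw [ENNReal.rpow_two, ← ENNReal.ofReal_pow (by positivity), Real.sq_sqrt (by positivity)]
  have hGG : ∫⁻ u in Ioi (0:ℝ), G u ^ (2:ℝ) =
      ∫⁻ u in Ioi (0:ℝ), ENNReal.ofReal (f u ^ 2 * (u ^ q * hnPhi u)) := by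
    refine setLIntegral_congr_fun measurableSet_Ioi fun u hu => ?_
    have hu : 0 < u := hu
    have := (hnPhi_pos u)
    simp only [hG]
    rw [ENNReal.rpow_two, ← ENNReal.ofReal_pow (by positivity), Real.sq_sqrt (by positivity)]
  rw [hFF, hGG, ← ENNReal.mul_rpow_of_nonneg _ _ (by norm_num)] at h3
  rw [h2] at h1
  calc _ ≤ ((hnM q * ∫⁻ u in Ioi (0:ℝ), ENNReal.ofReal (f u ^ 2 * (u ^ q * hnPhi u))) ^ (1/2:ℝ)) ^ 2 := by
        gcongr; exact h1.trans h3
    _ = _ := by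
        rw [← ENNReal.rpow_two, ← ENNReal.rpow_mul]; norm_num

lemma btbm_main (d : ℕ) (hd : d ≠ 0) (a b N q : ℝ)
    (h : ∀ u : ℝ, 0 < u → ∫⁻ x : EuclideanSpace ℝ (Fin d),
      ENNReal.ofReal ((heatK d (√a * u) x - heatK d (√b * u) x) ^ 2) ≤
        ENNReal.ofReal (u ^ (-(2 * q)) * N)) :
    ‖∫ x : EuclideanSpace ℝ (Fin d), (btbmK d a x - btbmK d b x) ^ 2‖ₑ ≤
      hnM q ^ 2 * ENNReal.ofReal N := by
  have hm := hnPhi_meas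
  have hmk := heatK_meas d
  have : Nonempty (Fin d) := ⟨⟨0, Nat.pos_of_ne_zero hd⟩⟩
  have hne : ∀ᵐ x : EuclideanSpace ℝ (Fin d), x ≠ 0 := by
    simp [ae_iff]
  have hjm : ∀ A : ℝ, Measurable (fun z : EuclideanSpace ℝ (Fin d) × ℝ => heatK d (A * z.2) z.1) :=
    fun A => hmk.comp (by fun_prop :
      Measurable fun z : EuclideanSpace ℝ (Fin d) × ℝ => (A * z.2, z.1))
  calc _ ≤ ∫⁻ x : EuclideanSpace ℝ (Fin d), ‖(btbmK d a x - btbmK d b x) ^ 2‖ₑ :=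
        enorm_integral_le_lintegral_enorm _
    _ ≤ ∫⁻ x : EuclideanSpace ℝ (Fin d), hnM q * ∫⁻ u in Ioi (0:ℝ),
          ENNReal.ofReal ((heatK d (√a * u) x - heatK d (√b * u) x) ^ 2 * (u ^ q * hnPhi u)) := by
        refine lintegral_mono_ae ?_
        filter_upwards [hne] with x hx
        rw [btbmK_eq d hd, btbmK_eq d hd, ← integral_sub (heatK_int d hd x hx _ (Real.sqrt_nonneg _))
          (heatK_int d hd x hx _ (Real.sqrt_nonneg _)), enorm_pow]
        simp only [← sub_mul]
        apply hn_cs q (fun u => heatK d (√a * u) x - heatK d (√b * u) x)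
        exact ((hjm √a).comp (measurable_prodMk_left (x := x))).sub
          ((hjm √b).comp (measurable_prodMk_left (x := x)))
    _ = hnM q * ∫⁻ u in Ioi (0:ℝ), ∫⁻ x : EuclideanSpace ℝ (Fin d),
          ENNReal.ofReal ((heatK d (√a * u) x - heatK d (√b * u) x) ^ 2 * (u ^ q * hnPhi u)) := by
        have hjj : Measurable (fun z : EuclideanSpace ℝ (Fin d) × ℝ =>
          ENNReal.ofReal ((heatK d (√a * z.2) z.1 - heatK d (√b * z.2) z.1) ^ 2
            * (z.2 ^ q * hnPhi z.2))) := by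
          have h1 := hjm √a
          have h2 := hjm √b
          fun_prop
        rw [lintegral_const_mul, lintegral_lintegral_swap]
        · exact hjj.aemeasurable
        · exact hjj.lintegral_prod_right'
    _ ≤ hnM q * ∫⁻ u in Ioi (0:ℝ), ENNReal.ofReal (u ^ (-q) * hnPhi u) * ENNReal.ofReal N := by
        refine mul_le_mul' le_rfl ?_
        refine setLIntegral_mono' measurableSet_Ioi fun u hu => ?_
        have hu : 0 < u := hu
        have hp := hnPhi_pos u
        simp only [ENNReal.ofReal_mul (sq_nonneg _)]
        rw [lintegral_mul_const]
        · calc _ ≤ ENNReal.ofReal (u ^ (-(2 * q)) * N) * ENNReal.ofReal (u ^ q * hnPhi u) := by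
                gcongr; exact h u hu
            _ = _ := by
                rw [← ENNReal.ofReal_mul' (by positivity), ← ENNReal.ofReal_mul (by positivity)]
                congr 1
                have : u ^ (-q) = u ^ (-(2*q)) * u ^ q := by
                  rw [← Real.rpow_add hu]; congr 1; ring
                rw [this]; ring
        · have h1 := (hjm √a).comp (measurable_prodMk_right (y := u))
          have h2 := (hjm √b).comp (measurable_prodMk_right (y := u))
          simp only [Function.comp_def] at h1 h2
          fun_prop
    _ = _ := by
        rw [lintegral_mul_const _ (by fun_prop), ← hnM]; ring

lemma heatK_inner (d : ℕ) (s u : ℝ) (hs : 0 < s) (hu : 0 < u) :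
    ∫ x : EuclideanSpace ℝ (Fin d), heatK d s x * heatK d u x
      = (2 * π * (s + u)) ^ (-(d:ℝ)/2) := by
  have hb : 0 < (s + u) / (2 * s * u) := by positivity
  have h := GaussianFourier.integral_rexp_neg_mul_sq_norm (V := EuclideanSpace ℝ (Fin d)) hb
  have e : ∀ x : EuclideanSpace ℝ (Fin d), heatK d s x * heatK d u x =
      ((2 * π * s) ^ (-(d : ℝ)/2) * (2 * π * u) ^ (-(d : ℝ)/2)) *
        Real.exp (-((s + u) / (2 * s * u)) * ‖x‖ ^ 2) := by
    intro x
    unfold heatK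
    have : -((s + u) / (2 * s * u)) * ‖x‖ ^ 2 = -‖x‖^2 / (2*s) + -‖x‖^2 / (2*u) := by
      field_simp; ring
    rw [this, Real.exp_add]; ring
  simp only [e]
  rw [integral_const_mul, h, finrank_euclideanSpace_fin]
  have h1 : π / ((s + u) / (2 * s * u)) = ((2 * π * s) * (2 * π * u)) * (2 * π * (s + u))⁻¹ := by
    field_simp
  have hX : 0 < (2 * π * s) * (2 * π * u) := by positivity
  have hY : 0 < 2 * π * (s + u) := by positivity
  rw [h1, neg_div, ← Real.mul_rpow (by positivity) (by positivity),
    Real.mul_rpow hX.le (by positivity), Real.inv_rpow hY.le,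
    ← Real.rpow_neg hY.le, ← mul_assoc, ← Real.rpow_add hX]
  simp

lemma heatK_inner_int (d : ℕ) (s u : ℝ) (hs : 0 < s) (hu : 0 < u) :
    Integrable (fun x : EuclideanSpace ℝ (Fin d) => heatK d s x * heatK d u x) :=
  Integrable.of_integral_ne_zero (by rw [heatK_inner d s u hs hu]; positivity)

lemma heatK_sq (d : ℕ) (A u : ℝ) (hA : 0 < A) (hu : 0 < u) :
    ∫⁻ x : EuclideanSpace ℝ (Fin d), ENNReal.ofReal (heatK d (√A * u) x ^ 2) =
      ENNReal.ofReal (u ^ (-(2 * ((d:ℝ)/4))) * ((4 * π) ^ (-(d:ℝ)/2) * A ^ (-((d:ℝ)/4)))) := by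
  have h0 : 0 < √A := Real.sqrt_pos.2 hA
  have h1 := heatK_inner d (√A * u) (√A * u) (by positivity) (by positivity)
  have h2 := heatK_inner_int d (√A * u) (√A * u) (by positivity) (by positivity)
  simp only [← pow_two] at h1 h2
  rw [← ofReal_integral_eq_lintegral_ofReal h2 (Filter.Eventually.of_forall fun x => sq_nonneg _), h1]
  congr 1
  have : 2 * π * (√A * u + √A * u) = u * ((4 * π) * √A) := by ring
  rw [this, Real.mul_rpow (by positivity) (by positivity),
    Real.mul_rpow (by positivity) (by positivity), Real.sqrt_eq_rpow, ← Real.rpow_mul hA.le]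
  congr 2
  · ring
  · congr 1; ring

lemma heatK_diff (d : ℕ) (A B u : ℝ) (hB : 0 < B) (hAB : B < A) (hu : 0 < u) :
    ∫⁻ x : EuclideanSpace ℝ (Fin d), ENNReal.ofReal ((heatK d (√A * u) x - heatK d (√B * u) x) ^ 2) ≤
      ENNReal.ofReal (u ^ (-(2 * ((d:ℝ)/4))) * ((4 * π) ^ (-(d:ℝ)/2) *
        (B ^ (-((d:ℝ)/4)) - A ^ (-((d:ℝ)/4))))) := by
  have hA : 0 < A := hB.trans hAB
  have h0 : 0 < √A := Real.sqrt_pos.2 hA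
  have h0' : 0 < √B := Real.sqrt_pos.2 hB
  have hle : √B ≤ √A := Real.sqrt_le_sqrt hAB.le
  have i1 := heatK_inner_int d (√A * u) (√A * u) (by positivity) (by positivity)
  have i2 := heatK_inner_int d (√A * u) (√B * u) (by positivity) (by positivity)
  have i3 := heatK_inner_int d (√B * u) (√B * u) (by positivity) (by positivity)
  have e : ∀ x : EuclideanSpace ℝ (Fin d), (heatK d (√A * u) x - heatK d (√B * u) x) ^ 2 =
      heatK d (√A * u) x * heatK d (√A * u) x - 2 * (heatK d (√A * u) x * heatK d (√B * u) x)
      + heatK d (√B * u) x * heatK d (√B * u) x := fun x => by ring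
  have hdiffint : Integrable (fun x : EuclideanSpace ℝ (Fin d) =>
      (heatK d (√A * u) x - heatK d (√B * u) x) ^ 2) := by
    simp only [e]
    exact (i1.sub (i2.const_mul 2)).add i3
  rw [← ofReal_integral_eq_lintegral_ofReal hdiffint (Filter.Eventually.of_forall fun x => sq_nonneg _)]
  apply ENNReal.ofReal_le_ofReal
  simp only [e]
  have i12 : Integrable (fun x : EuclideanSpace ℝ (Fin d) =>
      heatK d (√A * u) x * heatK d (√A * u) x -
        2 * (heatK d (√A * u) x * heatK d (√B * u) x)) := i1.sub (i2.const_mul 2)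
  rw [integral_add i12 i3, integral_sub i1 (i2.const_mul 2),
    integral_const_mul, heatK_inner _ _ _ (by positivity) (by positivity),
    heatK_inner _ _ _ (by positivity) (by positivity),
    heatK_inner _ _ _ (by positivity) (by positivity)]
  have key : ∀ X : ℝ, 0 < X → (2 * π * (√X * u + √X * u)) ^ (-(d:ℝ)/2) =
      u ^ (-(2 * ((d:ℝ)/4))) * ((4 * π) ^ (-(d:ℝ)/2) * X ^ (-((d:ℝ)/4))) := by
    intro X hX
    have : 2 * π * (√X * u + √X * u) = u * ((4 * π) * √X) := by ring
    rw [this, Real.mul_rpow (by positivity) (by positivity),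
      Real.mul_rpow (by positivity) (by positivity), Real.sqrt_eq_rpow, ← Real.rpow_mul hX.le]
    congr 2
    · ring
    · congr 1; ring
  have mono : (2 * π * (√A * u + √A * u)) ^ (-(d:ℝ)/2) ≤
      (2 * π * (√A * u + √B * u)) ^ (-(d:ℝ)/2) := by
    apply Real.rpow_le_rpow_of_nonpos (by positivity)
    · gcongr
    · have : (0:ℝ) ≤ d := by positivity
      linarith
  rw [key A hA] at mono ⊢
  rw [key B hB]
  linarith [mono]

/-- dominating function -/
noncomputable def domG (q r t s : ℝ) : ℝ :=
  if s < r then (r - s) ^ (-q) - (t - s) ^ (-q) else (t - s) ^ (-q)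

lemma domG_int (q r t : ℝ) (hq : q < 1) (hr : 0 < r) (hrt : r < t) :
    IntegrableOn (domG q r t) (Ioo 0 t) ∧
      ∫ s in Ioo 0 t, domG q r t s ≤ 2 / (1 - q) * (t - r) ^ (1 - q) := by
  have hI : ∀ c a b : ℝ, IntervalIntegrable (fun s => (c - s) ^ (-q)) volume a b := by
    intro c a b
    have := (intervalIntegral.intervalIntegrable_rpow' (a := c - a) (b := c - b) (r := -q)
      (by linarith)).comp_sub_left c
    simpa using this
  have hV : ∀ c a b : ℝ, ∫ s in a..b, (c - s) ^ (-q) =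
      ((c - a) ^ (1 - q) - (c - b) ^ (1 - q)) / (1 - q) := by
    intro c a b
    rw [intervalIntegral.integral_comp_sub_left (fun s => s ^ (-q)), integral_rpow (Or.inl (by linarith))]
    rw [show -q + 1 = 1 - q by ring]
  have e1 : EqOn (fun s => (r - s) ^ (-q) - (t - s) ^ (-q)) (domG q r t) (Ioo 0 r) := by
    intro s hs; simp [domG, hs.2]
  have e2 : EqOn (fun s => (t - s) ^ (-q)) (domG q r t) (Ioo r t) := by
    intro s hs; simp [domG, not_lt.2 hs.1.le]
  have J1 : IntegrableOn (domG q r t) (Ioo 0 r) := by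
    refine IntegrableOn.congr_fun ?_ e1 measurableSet_Ioo
    exact (intervalIntegrable_iff_integrableOn_Ioo_of_le hr.le).1 ((hI r 0 r).sub (hI t 0 r))
  have J2 : IntegrableOn (domG q r t) (Ioo r t) := by
    refine IntegrableOn.congr_fun ?_ e2 measurableSet_Ioo
    exact (intervalIntegrable_iff_integrableOn_Ioo_of_le hrt.le).1 (hI t r t)
  have K1 := (intervalIntegrable_iff_integrableOn_Ioo_of_le hr.le).2 J1
  have K2 := (intervalIntegrable_iff_integrableOn_Ioo_of_le hrt.le).2 J2
  refine ⟨(intervalIntegrable_iff_integrableOn_Ioo_of_le (hr.trans hrt).le).1 (K1.trans K2), ?_⟩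
  rw [← integral_Ioc_eq_integral_Ioo, ← intervalIntegral.integral_of_le (hr.trans hrt).le,
    ← intervalIntegral.integral_add_adjacent_intervals K1 K2]
  rw [intervalIntegral.integral_of_le hr.le, intervalIntegral.integral_of_le hrt.le,
    integral_Ioc_eq_integral_Ioo, integral_Ioc_eq_integral_Ioo,
    ← setIntegral_congr_fun measurableSet_Ioo e1, ← setIntegral_congr_fun measurableSet_Ioo e2,
    ← integral_Ioc_eq_integral_Ioo, ← integral_Ioc_eq_integral_Ioo,
    ← intervalIntegral.integral_of_le hr.le, ← intervalIntegral.integral_of_le hrt.le,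
    intervalIntegral.integral_sub (hI r 0 r) (hI t 0 r), hV, hV, hV]
  have hz : (0:ℝ) ^ (1 - q) = 0 := Real.zero_rpow (by linarith)
  simp only [sub_zero, sub_self, hz]
  have hm : r ^ (1 - q) ≤ t ^ (1 - q) := Real.rpow_le_rpow hr.le hrt.le (by linarith)
  have hq' : 0 < 1 - q := by linarith
  rw [← sub_div, ← add_div, div_mul_eq_mul_div]
  gcongr
  linarith

theorem btbmK_temporal_regularity (d : ℕ) (hd : d ∈ ({1, 2, 3} : Set ℕ)) :
    ∃ C : ℝ, 0 < C ∧ ∀ r t : ℝ, 0 < r → r < t →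
      ∫ s in Ioo (0:ℝ) t,
          ∫ x : EuclideanSpace ℝ (Fin d), (btbmK d (t - s) x - btbmK d (r - s) x)^2
        ≤ C * (t - r) ^ ((4 - (d : ℝ))/4) := by
  have hd0 : d ≠ 0 := by
    rintro rfl; simp at hd
  have hd3 : d ≤ 3 := by
    simp only [mem_insert_iff, mem_singleton_iff] at hd; omega
  have hq : (d:ℝ) / 4 < 1 := by
    have : (d:ℝ) ≤ 3 := by exact_mod_cast hd3
    linarith
  set q : ℝ := (d:ℝ) / 4 with hqd
  set c : ℝ := (4 * π) ^ (-(d:ℝ)/2) with hc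
  have hcpos : 0 < c := by positivity
  set M : ℝ := (hnM q).toReal with hM
  have hM0 : 0 ≤ M := ENNReal.toReal_nonneg
  have hMM : hnM q = ENNReal.ofReal M := (ENNReal.ofReal_toReal (hnM_lt_top q hq).ne).symm
  have hq' : 0 < 1 - q := by linarith
  refine ⟨M ^ 2 * c * (2 / (1 - q)) + 1, by positivity, fun r t hr hrt => ?_⟩
  obtain ⟨g1, g2⟩ := domG_int q r t hq hr hrt
  have hbound : ∀ s ∈ Ioo (0:ℝ) t,
      ∫ x : EuclideanSpace ℝ (Fin d), (btbmK d (t - s) x - btbmK d (r - s) x)^2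
        ≤ M ^ 2 * c * domG q r t s := by
    intro s hs
    have main : ∀ N : ℝ, 0 ≤ N → (∀ u : ℝ, 0 < u → ∫⁻ x : EuclideanSpace ℝ (Fin d),
      ENNReal.ofReal ((heatK d (√(t - s) * u) x - heatK d (√(r - s) * u) x) ^ 2) ≤
        ENNReal.ofReal (u ^ (-(2 * q)) * (c * N))) →
        ∫ x : EuclideanSpace ℝ (Fin d), (btbmK d (t - s) x - btbmK d (r - s) x)^2
          ≤ M ^ 2 * c * N := by
      intro N hN h
      have h1 := btbm_main d hd0 (t - s) (r - s) (c * N) q h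
      rw [hMM, ← ENNReal.ofReal_pow hM0, ← ENNReal.ofReal_mul (by positivity),
        Real.enorm_eq_ofReal_abs, ENNReal.ofReal_le_ofReal_iff (by positivity)] at h1
      rw [mul_assoc]
      exact (le_abs_self _).trans h1
    unfold domG
    split_ifs with hsr
    · apply main
      · rw [sub_nonneg]
        apply Real.rpow_le_rpow_of_nonpos (by linarith) (by linarith)
        have : (0:ℝ) ≤ d := by positivity
        rw [hqd]; linarith
      · intro u hu
        exact heatK_diff d (t - s) (r - s) u (by linarith) (by linarith) hu
    · have hts : 0 < t - s := by linarith [hs.2]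
      apply main
      · positivity
      · intro u hu
        rw [Real.sqrt_eq_zero_of_nonpos (by linarith : r - s ≤ 0)]
        simp only [zero_mul, heatK_zero d hd0, sub_zero]
        exact (heatK_sq d (t - s) u hts hu).le
  calc _ ≤ ∫ s in Ioo (0:ℝ) t, M ^ 2 * c * domG q r t s := by
        refine integral_mono_of_nonneg ?_ (g1.const_mul _) ?_
        · exact Filter.Eventually.of_forall fun s => integral_nonneg fun x => sq_nonneg _
        · exact (ae_restrict_iff' measurableSet_Ioo).2 (Filter.Eventually.of_forall hbound)
    _ = M ^ 2 * c * ∫ s in Ioo (0:ℝ) t, domG q r t s := integral_const_mul _ _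
    _ ≤ M ^ 2 * c * (2 / (1 - q) * (t - r) ^ (1 - q)) := by gcongr
    _ ≤ _ := by
        have e : (4 - (d:ℝ)) / 4 = 1 - q := by rw [hqd]; ring
        have hp : 0 ≤ (t - r) ^ (1 - q) := Real.rpow_nonneg (by linarith) _
        rw [e, add_mul]
        linarith
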